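/- arXiv:2511.04430 — 2 statements merged into one kernel-verified Lean document; each statement's English description precedes it below -/
import Mathlib

section
/- Let p be a prime, k ≥ 1, and f, g ∈ R_{p^k} such that BB_{p^k}(f,g) is topological. Then the module M = R_{p^k} ⧸ Ideal.span {f, g} is a free ZMod (p^k)-module of finite rank, and its rank equals the dimension of R_p ⧸ Ideal.span {f_p, g_p} as a vector space over ZMod p. -/
/-- The Laurent polynomial ring `(ZMod N)[X^{±1}, Y^{±1}]`. -/
abbrev RR (N : ℕ) : Type := AddMonoidAlgebra (ZMod N) (ℤ × ℤ)

/-- The code `BB_N(f,g)` is topological. -/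
def IsTopological {N : ℕ} (f g : RR N) : Prop :=
  ∀ r s : RR N, r * f + s * g = 0 → ∃ h : RR N, r = h * g ∧ s = -(h * f)

/-- Coefficientwise reduction `R_N → R_p` modulo a divisor `p` of `N`. -/
noncomputable def red (N p : ℕ) (h : p ∣ N) : RR N →+* RR p :=
  AddMonoidAlgebra.liftNCRingHom
    ((AddMonoidAlgebra.singleZeroRingHom).comp (ZMod.castHom h (ZMod p)))
    (AddMonoidAlgebra.of (ZMod p) (ℤ × ℤ))
    (fun _ _ => Commute.all _ _)

/-!
Let `𝔪` be the nilpotent maximal ideal of an Artinian local ring `A` with residue field `K`, and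
let `B` be the Laurent polynomial ring over `A`. The ring `B ⧸ 𝔪B` is a domain and `f`, `g` do not
both vanish in it; say `f` does not. Multiplication by `f` is then split injective over `A`, so an
element `u` of `A` divides `x` in `B` as soon as it divides `x * f`. A relation between `f` and `g`
modulo `𝔪` becomes a true relation after multiplication by a generator `u` of a minimal ideal of
`A`; it is a multiple `h` of the Koszul relation, `u` divides `h`, and cancelling `u` shows that
Koszul exactness descends to `K`.

Over `K`, exactness makes `f, g` a regular sequence (or the unit ideal) in a domain of dimension
at most `2`, so the quotient is Artinian, hence finite-dimensional. Over `A`, exactness modulo `𝔪`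
gives `Tor₁(K, B ⧸ (f, g)) = 0`, hence freeness, and the rank can be computed modulo `𝔪`.
-/

/-- Exactness in the middle of the Koszul complex `R → R² → R` of `f` and `g`: every relation
between `f` and `g` is a multiple of the trivial one. For Laurent polynomials over `ZMod N` this is
`IsTopological`. -/
def IsKoszulExact {R : Type*} [CommRing R] (f g : R) : Prop :=
  ∀ r s : R, r * f + s * g = 0 → ∃ h : R, r = h * g ∧ s = -(h * f)

namespace IsKoszulExact

variable {R : Type*} [CommRing R] {f g : R}

theorem symm (h : IsKoszulExact f g) : IsKoszulExact g f := fun r s hrs ↦ by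
  obtain ⟨c, rfl, rfl⟩ := h s r (by rw [add_comm, hrs])
  exact ⟨-c, by ring, by ring⟩

theorem mem_nonZeroDivisors_of_isNilpotent (h : IsKoszulExact f g) (hg : IsNilpotent g) :
    f ∈ nonZeroDivisors R := by
  refine mem_nonZeroDivisors_iff_right.mpr fun x hx ↦ ?_
  have hdvd (n : ℕ) : ∃ y, x = y * g ^ n ∧ y * f = 0 := by
    induction n with
    | zero => exact ⟨x, by ring, hx⟩
    | succ n ih =>
      obtain ⟨y, rfl, hy⟩ := ih
      obtain ⟨z, rfl, hz⟩ := h y 0 (by linear_combination hy)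
      exact ⟨z, by ring, by linear_combination hz⟩
  obtain ⟨n, hn⟩ := hg
  obtain ⟨y, rfl, -⟩ := hdvd n
  rw [hn, mul_zero]

theorem not_isNilpotent_and_isNilpotent [Nontrivial R] (h : IsKoszulExact f g) :
    ¬ (IsNilpotent f ∧ IsNilpotent g) := fun ⟨⟨n, hn⟩, hg⟩ ↦
  zero_notMem_nonZeroDivisors (hn ▸ pow_mem (h.mem_nonZeroDivisors_of_isNilpotent hg) n)

theorem mk_mem_nonZeroDivisors (h : IsKoszulExact f g) :
    Ideal.Quotient.mk (Ideal.span {f}) g ∈ nonZeroDivisors (R ⧸ Ideal.span {f}) := by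
  refine mem_nonZeroDivisors_iff_right.mpr fun x hx ↦ ?_
  obtain ⟨s, rfl⟩ := Ideal.Quotient.mk_surjective x
  rw [← map_mul, Ideal.Quotient.eq_zero_iff_dvd] at hx
  obtain ⟨c, hc⟩ := hx
  obtain ⟨y, -, hs⟩ := h (-c) s (by linear_combination hc)
  exact (Ideal.Quotient.eq_zero_iff_dvd _ _).mpr ⟨-y, by linear_combination hs⟩

theorem span_pair_eq_top_of_eq_zero (h : IsKoszulExact 0 g) : Ideal.span {0, g} = ⊤ := by
  obtain ⟨c, hc, -⟩ := h 1 0 (by ring)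
  exact (Ideal.eq_top_iff_one _).mpr (Ideal.mem_span_pair.mpr ⟨0, c, by rw [hc]; ring⟩)

theorem ringKrullDim_quotient_span_pair_add_two_le [IsDomain R] (h : IsKoszulExact f g) :
    ringKrullDim (R ⧸ Ideal.span {f, g}) + 2 ≤ ringKrullDim R := by
  obtain rfl | hf := eq_or_ne f 0
  · have := Ideal.Quotient.subsingleton_iff.mpr h.span_pair_eq_top_of_eq_zero
    simp [ringKrullDim_eq_bot_of_subsingleton]
  have hle : Ideal.span {f} ≤ Ideal.span {f, g} := Ideal.span_mono (by simp)
  have hg : Ideal.Quotient.mk (Ideal.span {f, g}) g = 0 :=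
    Ideal.Quotient.eq_zero_iff_mem.mpr (Ideal.subset_span (by simp))
  calc ringKrullDim (R ⧸ Ideal.span {f, g}) + 2
      = ringKrullDim (R ⧸ Ideal.span {f, g}) + 1 + 1 := by rw [add_assoc, one_add_one_eq_two]
    _ ≤ ringKrullDim (R ⧸ Ideal.span {f}) + 1 := by
      gcongr
      exact ringKrullDim_succ_le_of_surjective (Ideal.Quotient.factor hle)
        (Ideal.Quotient.factor_surjective hle) h.mk_mem_nonZeroDivisors hg
    _ ≤ ringKrullDim R :=
      ringKrullDim_quotient_succ_le_of_nonZeroDivisor (mem_nonZeroDivisors_of_ne_zero hf)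

theorem finite_quotient_span_pair {K : Type*} [Field K] [Algebra K R] [Algebra.FiniteType K R]
    [IsDomain R] (hdim : ringKrullDim R ≤ 2) (h : IsKoszulExact f g) :
    Module.Finite K (R ⧸ Ideal.span {f, g}) := by
  have hle : ringKrullDim (R ⧸ Ideal.span {f, g}) + 2 ≤ 0 + 2 := by
    simpa using h.ringKrullDim_quotient_span_pair_add_two_le.trans hdim
  rw [Module.finite_iff_krullDimLE_zero, Ring.krullDimLE_iff]
  exact (ENat.WithBot.add_le_add_natCast_right_iff (c := 2)).mp hle

theorem span_pair_inf_ker_le {S : Type*} [CommRing S] {π : R →+* S}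
    (hπ : Function.Surjective π) (h : IsKoszulExact (π f) (π g)) :
    Ideal.span {f, g} ⊓ RingHom.ker π ≤ RingHom.ker π * Ideal.span {f, g} := by
  rintro x ⟨hx, hπx⟩
  obtain ⟨r, s, rfl⟩ := Ideal.mem_span_pair.mp hx
  obtain ⟨c, hr, hs⟩ := h (π r) (π s) (by simpa using hπx)
  obtain ⟨c, rfl⟩ := hπ c
  have hr' : r - c * g ∈ RingHom.ker π := by simp [RingHom.mem_ker, hr]
  have hs' : s + c * f ∈ RingHom.ker π := by simp [RingHom.mem_ker, hs]
  have hsum : r * f + s * g = (r - c * g) * f + (s + c * f) * g := by ring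
  rw [hsum]
  exact add_mem (Ideal.mul_mem_mul hr' (Ideal.subset_span (by simp)))
    (Ideal.mul_mem_mul hs' (Ideal.subset_span (by simp)))

end IsKoszulExact

section NilpotentMaximalIdeal

variable {A M N : Type*} [CommRing A] [AddCommGroup M] [Module A M] [AddCommGroup N] [Module A N]
  {I : Ideal A}

theorem isNilpotent_of_range_le_smul_top (hI : IsNilpotent I) {e : Module.End A M}
    (he : LinearMap.range e ≤ I • ⊤) : IsNilpotent e := by
  have hpow (n : ℕ) : LinearMap.range (e ^ n) ≤ I ^ n • ⊤ := by
    induction n with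
    | zero => simp
    | succ n ih =>
      rw [pow_succ', Module.End.mul_eq_comp, LinearMap.range_comp, pow_succ, mul_smul]
      calc Submodule.map e (LinearMap.range (e ^ n))
          ≤ Submodule.map e (I ^ n • ⊤) := Submodule.map_mono ih
        _ = I ^ n • LinearMap.range e := by rw [Submodule.map_smul'', Submodule.map_top]
        _ ≤ I ^ n • I • ⊤ := smul_mono_right _ he
  obtain ⟨n, hn⟩ := hI
  refine ⟨n, LinearMap.range_eq_bot.mp (le_bot_iff.mp ?_)⟩
  simpa [hn] using hpow n

theorem exists_leftInverse_mod_smul_top [I.IsMaximal] [Module.Projective A N] {φ : M →ₗ[A] N}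
    (hφ : ∀ x, φ x ∈ I • (⊤ : Submodule A N) → x ∈ I • (⊤ : Submodule A M)) :
    ∃ ψ : N →ₗ[A] M, LinearMap.range (ψ ∘ₗ φ - LinearMap.id) ≤ I • ⊤ := by
  let := Ideal.Quotient.field I
  let φI : (M ⧸ I • (⊤ : Submodule A M)) →ₗ[A ⧸ I] (N ⧸ I • (⊤ : Submodule A N)) :=
    LinearMap.extendScalarsOfSurjective Ideal.Quotient.mk_surjective
      (Submodule.mapQ _ _ φ (Submodule.smul_top_le_comap_smul_top I φ))
  have hφI : LinearMap.ker φI = ⊥ := by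
    refine LinearMap.ker_eq_bot'.mpr fun x hx ↦ ?_
    obtain ⟨x, rfl⟩ := Submodule.mkQ_surjective _ x
    exact (Submodule.Quotient.mk_eq_zero _).mpr (hφ x ((Submodule.Quotient.mk_eq_zero _).mp hx))
  obtain ⟨χ, hχ⟩ := φI.exists_leftInverse_of_injective hφI
  obtain ⟨ψ, hψ⟩ := Module.projective_lifting_property (Submodule.mkQ (I • (⊤ : Submodule A M)))
    (χ.restrictScalars A ∘ₗ Submodule.mkQ _) (Submodule.mkQ_surjective _)
  refine ⟨ψ, ?_⟩
  rintro _ ⟨x, rfl⟩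
  refine (Submodule.Quotient.eq _).mp ?_
  exact (LinearMap.congr_fun hψ (φ x)).trans (LinearMap.congr_fun hχ (Submodule.Quotient.mk x))

theorem exists_leftInverse_of_isNilpotent [I.IsMaximal] (hI : IsNilpotent I)
    [Module.Projective A N] {φ : M →ₗ[A] N}
    (hφ : ∀ x, φ x ∈ I • (⊤ : Submodule A N) → x ∈ I • (⊤ : Submodule A M)) :
    ∃ ψ : N →ₗ[A] M, ψ ∘ₗ φ = LinearMap.id := by
  -- The endomorphism `ψ ∘ φ - 1` is nilpotent, so `ψ ∘ φ` is invertible.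
  obtain ⟨ψ, hψ⟩ := exists_leftInverse_mod_smul_top hφ
  have hunit : IsUnit (ψ ∘ₗ φ : Module.End A M) := by
    simpa [Module.End.one_eq_id] using (isNilpotent_of_range_le_smul_top hI hψ).isUnit_one_add
  obtain ⟨θ, hθ⟩ := hunit.exists_left_inv
  exact ⟨θ ∘ₗ ψ, hθ⟩

theorem exists_mul_eq_zero_iff_mem [hmax : I.IsMaximal] (hI : IsNilpotent I) :
    ∃ u : A, ∀ a, u * a = 0 ↔ a ∈ I := by
  have : Nontrivial A := (Ideal.Quotient.mk I).domain_nontrivial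
  obtain ⟨u, huI, hu⟩ := Submodule.exists_mem_ne_zero_of_ne_bot (pow_pred_nilpotencyClass hI)
  have hle : I ≤ Ideal.torsionOf A A u := fun a ha ↦ by
    have hau : a * u ∈ I ^ (nilpotencyClass I - 1 + 1) := by
      rw [pow_succ']
      exact Ideal.mul_mem_mul ha huI
    rwa [Nat.sub_add_cancel (pos_nilpotencyClass_iff.mpr hI), pow_nilpotencyClass hI] at hau
  have heq : I = Ideal.torsionOf A A u :=
    hmax.eq_of_le (by rwa [Ne, Ideal.torsionOf_eq_top_iff]) hle
  exact ⟨u, fun a ↦ by rw [heq, Ideal.mem_torsionOf_iff, smul_eq_mul, mul_comm]⟩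

theorem mem_smul_top_of_smul_eq_zero [Module.Flat A M] {u : A} (hu : ∀ a, u * a = 0 → a ∈ I)
    {x : M} (hx : u • x = 0) : x ∈ I • (⊤ : Submodule A M) := by
  obtain ⟨k, a, y, hxy, ha⟩ := Module.Flat.isTrivialRelation_of_sum_smul_eq_zero
    (ι := Unit) (f := fun _ ↦ u) (x := fun _ ↦ x) (by simpa using hx)
  rw [show x = _ from hxy ()]
  exact sum_mem fun j _ ↦ Submodule.smul_mem_smul (hu _ (by simpa using ha j)) trivial

theorem lid_rTensor_subtype_lTensor (φ : M →ₗ[A] N) (z : TensorProduct A I M) :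
    TensorProduct.lid A N (I.subtype.rTensor N (φ.lTensor I z)) =
      φ (TensorProduct.lid A M (I.subtype.rTensor M z)) := by
  induction z with
  | zero => simp
  | tmul a x => simp
  | add y z hy hz => simp only [map_add, hy, hz]

theorem rTensor_subtype_injective_of_ker_inf_smul_top_le [Module.Flat A M] {φ : M →ₗ[A] N}
    (hφ : Function.Surjective φ) (h : LinearMap.ker φ ⊓ I • ⊤ ≤ I • LinearMap.ker φ) :
    Function.Injective (I.subtype.rTensor N) := by
  have hM : Function.Injective ((TensorProduct.lid A M).toLinearMap ∘ₗ I.subtype.rTensor M) := by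
    simpa using Module.Flat.iff_rTensor_injective'.mp ‹_› I
  refine (injective_iff_map_eq_zero _).mpr fun z hz ↦ ?_
  obtain ⟨y, rfl⟩ := LinearMap.lTensor_surjective I hφ z
  set m : M := TensorProduct.lid A M (I.subtype.rTensor M y)
  have hmI : m ∈ I • (⊤ : Submodule A M) := by
    rw [← Ideal.subtype_rTensor_range]
    exact ⟨y, rfl⟩
  have hmφ : φ m = 0 := by
    rw [← lid_rTensor_subtype_lTensor, hz, map_zero]
  obtain ⟨w, hw⟩ : ∃ w, TensorProduct.lid A _ (I.subtype.rTensor _ w) =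
      (⟨m, hmφ⟩ : LinearMap.ker φ) := by
    have := (Submodule.mem_smul_top_iff I (LinearMap.ker φ) ⟨m, hmφ⟩).mpr (h ⟨hmφ, hmI⟩)
    rwa [← Ideal.subtype_rTensor_range] at this
  have hwy : (LinearMap.ker φ).subtype.lTensor I w = y :=
    hM ((lid_rTensor_subtype_lTensor _ w).trans (congrArg Subtype.val hw))
  exact (lTensor_exact I φ.exact_subtype_ker_map hφ y).mpr ⟨w, hwy⟩

end NilpotentMaximalIdeal

section Reduction

variable {A B : Type*} [CommRing A] [CommRing B] [Algebra A B] {I : Ideal A}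

theorem map_le_nilradical_of_isNilpotent (hI : IsNilpotent I) :
    I.map (algebraMap A B) ≤ nilradical B := by
  obtain ⟨n, hn⟩ := hI
  refine Ideal.map_le_iff_le_comap.mpr fun a ha ↦ ?_
  have han : IsNilpotent a := ⟨n, by simpa [hn] using Ideal.pow_mem_pow ha n⟩
  exact han.map (algebraMap A B)

theorem exists_algebraMap_mul_eq_zero_iff_mem_map [I.IsMaximal] (hI : IsNilpotent I)
    [Module.Flat A B] :
    ∃ u : A, ∀ x : B, algebraMap A B u * x = 0 ↔ x ∈ I.map (algebraMap A B) := by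
  obtain ⟨u, hu⟩ := exists_mul_eq_zero_iff_mem hI
  have hle : I.map (algebraMap A B) ≤ Ideal.torsionOf B B (algebraMap A B u) :=
    Ideal.map_le_iff_le_comap.mpr fun a ha ↦ by
      simp [← map_mul, mul_comm a, (hu a).mpr ha]
  refine ⟨u, fun x ↦ ⟨fun hx ↦ ?_, fun hx ↦ by simpa [mul_comm] using hle hx⟩⟩
  rw [← Algebra.smul_def] at hx
  simpa [Ideal.smul_top_eq_map] using mem_smul_top_of_smul_eq_zero (fun a ↦ (hu a).mp) hx

theorem algebraMap_dvd_of_dvd_mul [I.IsMaximal] (hI : IsNilpotent I) [Module.Projective A B]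
    {f : B} (hf : ∀ x, x * f ∈ I.map (algebraMap A B) → x ∈ I.map (algebraMap A B)) {u : A} {x : B}
    (hx : algebraMap A B u ∣ x * f) : algebraMap A B u ∣ x := by
  obtain ⟨ψ, hψ⟩ := exists_leftInverse_of_isNilpotent hI (φ := LinearMap.mulRight A f)
    (by simpa [Ideal.smul_top_eq_map] using hf)
  obtain ⟨y, hy⟩ := hx
  refine ⟨ψ y, ?_⟩
  calc x = ψ (x * f) := (LinearMap.congr_fun hψ x).symm
    _ = algebraMap A B u * ψ y := by rw [hy, ← Algebra.smul_def, map_smul, Algebra.smul_def]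

namespace IsKoszulExact

variable {C : Type*} [CommRing C] [IsDomain C] {π : B →+* C} {f g : B}

theorem map_of_map_ne_zero [I.IsMaximal] (hI : IsNilpotent I) [Module.Projective A B]
    (hπ : Function.Surjective π) (hker : RingHom.ker π = I.map (algebraMap A B))
    (hf : π f ≠ 0) (h : IsKoszulExact f g) : IsKoszulExact (π f) (π g) := by
  obtain ⟨u, hu⟩ := exists_algebraMap_mul_eq_zero_iff_mem_map (B := B) hI
  simp only [← hker, RingHom.mem_ker] at hu
  set v := algebraMap A B u
  intro r s hrs
  obtain ⟨r, rfl⟩ := hπ r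
  obtain ⟨s, rfl⟩ := hπ s
  obtain ⟨c, hr, hs⟩ := h (v * r) (v * s)
    (by linear_combination (hu (r * f + s * g)).mpr (by simpa using hrs))
  obtain ⟨c, rfl⟩ : v ∣ c := by
    refine algebraMap_dvd_of_dvd_mul hI (f := f) (fun x hx ↦ ?_) ⟨-s, by linear_combination hs⟩
    rw [← hker, RingHom.mem_ker, map_mul] at hx
    rw [← hker, RingHom.mem_ker]
    exact (mul_eq_zero.mp hx).resolve_right hf
  have hr' := (hu (r - c * g)).mp (by linear_combination hr)
  have hs' := (hu (s + c * f)).mp (by linear_combination hs)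
  simp only [map_sub, map_add, map_mul] at hr' hs'
  exact ⟨π c, sub_eq_zero.mp hr', eq_neg_of_add_eq_zero_left hs'⟩

theorem map [I.IsMaximal] (hI : IsNilpotent I) [Module.Projective A B]
    (hπ : Function.Surjective π) (hker : RingHom.ker π = I.map (algebraMap A B))
    (h : IsKoszulExact f g) : IsKoszulExact (π f) (π g) := by
  have hnil : RingHom.ker π ≤ nilradical B := hker ▸ map_le_nilradical_of_isNilpotent hI
  have := π.domain_nontrivial
  by_cases hf : π f = 0
  · have hg : π g ≠ 0 := fun hg ↦
      h.not_isNilpotent_and_isNilpotent ⟨mem_nilradical.mp (hnil hf), mem_nilradical.mp (hnil hg)⟩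
    exact (h.symm.map_of_map_ne_zero hI hπ hker hg).symm
  · exact h.map_of_map_ne_zero hI hπ hker hf

end IsKoszulExact

theorem IsKoszulExact.free_quotient_span_pair [IsLocalRing A] [Module.Flat A B] {C : Type*}
    [CommRing C] {π : B →+* C} {f g : B} (hπ : Function.Surjective π)
    (hker : RingHom.ker π = (IsLocalRing.maximalIdeal A).map (algebraMap A B))
    (h : IsKoszulExact (π f) (π g)) [Module.FinitePresentation A (B ⧸ Ideal.span {f, g})] :
    Module.Free A (B ⧸ Ideal.span {f, g}) := by
  have hmk : LinearMap.ker (Ideal.Quotient.mkₐ A (Ideal.span {f, g})).toLinearMap =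
      (Ideal.span {f, g}).restrictScalars A := by
    ext x
    simp [Ideal.Quotient.eq_zero_iff_mem]
  refine Module.free_of_maximalIdeal_rTensor_injective <|
    rTensor_subtype_injective_of_ker_inf_smul_top_le
      (φ := (Ideal.Quotient.mkₐ A (Ideal.span {f, g})).toLinearMap)
      (Ideal.Quotient.mkₐ_surjective A _) ?_
  rw [hmk, Ideal.smul_top_eq_map, ← Ideal.smul_restrictScalars, ← hker]
  exact h.span_pair_inf_ker_le hπ

theorem ker_quotientMap_eq_map_ker {C : Type*} [CommRing C] {π : B →+* C}
    (hπ : Function.Surjective π) (J : Ideal B) :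
    RingHom.ker (Ideal.quotientMap (J.map π) π Ideal.le_comap_map) =
      (RingHom.ker π).map (Ideal.Quotient.mk J) := by
  refine (Ideal.ker_quotient_lift ((Ideal.Quotient.mk (J.map π)).comp π) _).trans ?_
  rw [← RingHom.comap_ker, Ideal.mk_ker, Ideal.comap_map_of_surjective' π hπ,
    Ideal.map_sup, Ideal.map_quotient_self, bot_sup_eq]

theorem finite_of_ker_eq_map [IsNoetherianRing A] (hI : IsNilpotent I) {T : Type*} [CommRing T]
    [Algebra A T] [Module.Finite A T] {ρ : B →ₐ[A] T} (hρ : Function.Surjective ρ)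
    (hker : RingHom.ker ρ = I.map (algebraMap A B)) : Module.Finite A B := by
  refine Module.finite_of_surjective_of_ker_le_nilradical ρ hρ ?_ ?_
  · exact hker ▸ map_le_nilradical_of_isNilpotent hI
  · exact hker ▸ Ideal.FG.map (IsNoetherian.noetherian I) (algebraMap A B)

theorem finrank_eq_of_ker_eq_map [IsLocalRing A] [Module.Free A B] [Module.Finite A B]
    {K T : Type*} [Field K] [Algebra A K] [CommRing T] [Algebra A T] [Algebra K T]
    [IsScalarTower A K T] (hK : Function.Surjective (algebraMap A K)) {ρ : B →ₐ[A] T}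
    (hρ : Function.Surjective ρ)
    (hker : RingHom.ker ρ = (IsLocalRing.maximalIdeal A).map (algebraMap A B)) :
    Module.finrank A B = Module.finrank K T := by
  have hm : IsLocalRing.maximalIdeal A = RingHom.ker (algebraMap A K) :=
    (IsLocalRing.eq_maximalIdeal (RingHom.ker_isMaximal_of_surjective _ hK)).symm
  rw [← IsLocalRing.finrank_quotient_map]
  refine Algebra.finrank_eq_of_equiv_equiv
    ((Ideal.quotEquivOfEq hm).trans (RingHom.quotientKerEquivOfSurjective hK))
    ((Ideal.quotEquivOfEq hker.symm).trans
      (RingHom.quotientKerEquivOfSurjective (f := ρ.toRingHom) hρ)) ?_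
  ext a
  exact (IsScalarTower.algebraMap_apply A K T a).symm.trans (ρ.commutes a).symm

end Reduction

section LaurentPolynomials

open Polynomial LaurentPolynomial

theorem ringKrullDim_le_of_isLocalization {R : Type*} (S : Type*) [CommRing R] [CommRing S]
    [Algebra R S] (M : Submonoid R) [IsLocalization M S] : ringKrullDim S ≤ ringKrullDim R :=
  Order.krullDim_le_of_strictMono (PrimeSpectrum.comap (algebraMap R S)) <|
    Monotone.strictMono_of_injective (fun _ _ h ↦ Ideal.comap_mono h)
      (PrimeSpectrum.localization_comap_injective S M)

theorem ringKrullDim_laurentPolynomial_le (R : Type*) [CommRing R] [IsNoetherianRing R] :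
    ringKrullDim R[T;T⁻¹] ≤ ringKrullDim R + 1 :=
  (ringKrullDim_le_of_isLocalization _ (Submonoid.powers (X : R[X]))).trans
    Polynomial.ringKrullDim_of_isNoetherianRing.le

theorem ringKrullDim_addMonoidAlgebra_int_prod_int_le (R : Type*) [CommRing R]
    [IsNoetherianRing R] : ringKrullDim (AddMonoidAlgebra R (ℤ × ℤ)) ≤ ringKrullDim R + 2 := by
  have : IsNoetherianRing R[T;T⁻¹] :=
    IsLocalization.isNoetherianRing (Submonoid.powers (X : R[X])) _ inferInstance
  calc ringKrullDim (AddMonoidAlgebra R (ℤ × ℤ))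
      = ringKrullDim R[T;T⁻¹][T;T⁻¹] :=
        ringKrullDim_eq_of_ringEquiv AddMonoidAlgebra.curryRingEquiv
    _ ≤ ringKrullDim R[T;T⁻¹] + 1 := ringKrullDim_laurentPolynomial_le _
    _ ≤ ringKrullDim R + 1 + 1 := by gcongr; exact ringKrullDim_laurentPolynomial_le R
    _ = ringKrullDim R + 2 := by rw [add_assoc, one_add_one_eq_two]

theorem ker_mapRingHom_eq_map {R S G : Type*} [CommRing R] [CommRing S] [AddCommMonoid G]
    (σ : R →+* S) : RingHom.ker (AddMonoidAlgebra.mapRingHom G σ) =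
      (RingHom.ker σ).map (algebraMap R (AddMonoidAlgebra R G)) := by
  refine le_antisymm (fun x hx ↦ ?_) (Ideal.map_le_iff_le_comap.mpr fun a ha ↦ ?_)
  · have hcoeff (m : G) : x.coeff m ∈ RingHom.ker σ := by
      rw [RingHom.mem_ker, ← AddMonoidAlgebra.coeff_mapRingHom, RingHom.mem_ker.mp hx]
      rfl
    rw [← AddMonoidAlgebra.sum_coeff_single x]
    refine sum_mem fun m _ ↦ ?_
    have hsingle : AddMonoidAlgebra.single m (x.coeff m) =
        algebraMap R _ (x.coeff m) * AddMonoidAlgebra.single m 1 := by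
      simp [AddMonoidAlgebra.single_mul_single]
    rw [hsingle]
    exact Ideal.mul_mem_right _ _ (Ideal.mem_map_of_mem _ (hcoeff m))
  · simp [RingHom.mem_ker.mp ha]

theorem red_eq_mapRingHom {N p : ℕ} (h : p ∣ N) :
    red N p h = AddMonoidAlgebra.mapRingHom (ℤ × ℤ) (ZMod.castHom h (ZMod p)) := by
  apply AddMonoidAlgebra.ringHom_ext <;> intros <;>
    simp [red, AddMonoidAlgebra.liftNCRingHom, AddMonoidAlgebra.single_mul_single]

end LaurentPolynomials

theorem isLocalRing_zmod_prime_pow {p k : ℕ} [Fact p.Prime] (hk : k ≠ 0) :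
    IsLocalRing (ZMod (p ^ k)) := by
  have : Nontrivial (ZMod (p ^ k)) :=
    (ZMod.castHom (dvd_pow_self p hk) (ZMod p)).domain_nontrivial
  exact .of_surjective' (PadicInt.toZModPow k) (ZMod.ringHom_surjective _)

theorem stmt3_general {A K : Type*} [CommRing A] [IsLocalRing A] [IsArtinianRing A] [Field K]
    (σ : A →+* K) (hσ : Function.Surjective σ) {f g : AddMonoidAlgebra A (ℤ × ℤ)}
    (hfg : IsKoszulExact f g) :
    Module.Free A (AddMonoidAlgebra A (ℤ × ℤ) ⧸ Ideal.span {f, g}) ∧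
    Module.Finite A (AddMonoidAlgebra A (ℤ × ℤ) ⧸ Ideal.span {f, g}) ∧
    Module.finrank A (AddMonoidAlgebra A (ℤ × ℤ) ⧸ Ideal.span {f, g}) =
      Module.finrank K (AddMonoidAlgebra K (ℤ × ℤ) ⧸ Ideal.span
        {AddMonoidAlgebra.mapRingHom _ σ f, AddMonoidAlgebra.mapRingHom _ σ g}) := by
  let := σ.toAlgebra
  let π := AddMonoidAlgebra.mapAlgHom (ℤ × ℤ) (Algebra.ofId A K)
  have hπ : Function.Surjective π := AddMonoidAlgebra.map_surjective _ hσ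
  have hnil : IsNilpotent (IsLocalRing.maximalIdeal A) :=
    (isArtinianRing_iff_isNilpotent_maximalIdeal A).mp ‹_›
  have hker : RingHom.ker π.toRingHom = (IsLocalRing.maximalIdeal A).map (algebraMap A _) := by
    rw [← IsLocalRing.eq_maximalIdeal (RingHom.ker_isMaximal_of_surjective σ hσ)]
    exact ker_mapRingHom_eq_map σ
  have hexact : IsKoszulExact (π f) (π g) := hfg.map (π := π.toRingHom) hnil hπ hker
  have hfiniteK := hexact.finite_quotient_span_pair (K := K)
    (by simpa using ringKrullDim_addMonoidAlgebra_int_prod_int_le K)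
  have hspan : (Ideal.span {f, g}).map π = Ideal.span {π f, π g} := by
    rw [Ideal.map_span, Set.image_pair]
  change _ ∧ _ ∧ _ = Module.finrank K (_ ⧸ Ideal.span {π f, π g})
  rw [← hspan] at hfiniteK ⊢
  let ρ := Ideal.quotientMapₐ ((Ideal.span {f, g}).map π) π Ideal.le_comap_map
  have hρ : Function.Surjective ρ :=
    Ideal.quotientMap_surjective (H := Ideal.le_comap_map) hπ
  have hkerρ : RingHom.ker ρ = (IsLocalRing.maximalIdeal A).map (algebraMap A _) := by
    rw [IsScalarTower.algebraMap_eq A (AddMonoidAlgebra A (ℤ × ℤ)), ← Ideal.map_map, ← hker]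
    exact ker_quotientMap_eq_map_ker hπ (Ideal.span {f, g})
  have : Module.Finite A K := .of_surjective (Algebra.linearMap A K) hσ
  have : Module.Finite A (AddMonoidAlgebra K (ℤ × ℤ) ⧸ (Ideal.span {f, g}).map π) := .trans K _
  have hfinite := finite_of_ker_eq_map hnil hρ hkerρ
  have := Module.finitePresentation_of_finite A (AddMonoidAlgebra A (ℤ × ℤ) ⧸ Ideal.span {f, g})
  have hfree := hexact.free_quotient_span_pair (π := π.toRingHom) hπ hker
  exact ⟨hfree, hfinite, finrank_eq_of_ker_eq_map hσ hρ hkerρ⟩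

theorem stmt3 (p k : ℕ) (hp : p.Prime) (hk : 1 ≤ k) (f g : RR (p ^ k))
    (htopo : IsTopological f g) :
    Module.Free (ZMod (p ^ k)) (RR (p ^ k) ⧸ Ideal.span {f, g}) ∧
    Module.Finite (ZMod (p ^ k)) (RR (p ^ k) ⧸ Ideal.span {f, g}) ∧
    Module.finrank (ZMod (p ^ k)) (RR (p ^ k) ⧸ Ideal.span {f, g}) =
      Module.finrank (ZMod p)
        (RR p ⧸ Ideal.span
          {red (p ^ k) p (dvd_pow_self p (by omega)) f,
           red (p ^ k) p (dvd_pow_self p (by omega)) g}) := by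
  have : Fact p.Prime := ⟨hp⟩
  have hk₀ : k ≠ 0 := by omega
  have := isLocalRing_zmod_prime_pow (p := p) hk₀
  rw [red_eq_mapRingHom]
  exact stmt3_general _ (ZMod.castHom_surjective (dvd_pow_self p hk₀)) htopo
end

section
/- Let N be a positive integer, a an integer, N_a the largest divisor of N coprime to a, and α a natural number. Then X^α − 1 lies in the ideal Ideal.span {(X − a)(X − 1), (Y − a)(Y − 1)} of R_N if and only if N_a divides the integer G_α = ∑_{m=0}^{α−1} a^m. -/
/-- The monomial `X`. -/
noncomputable def Xv (N : ℕ) : RR N := AddMonoidAlgebra.single ((1 : ℤ), (0 : ℤ)) 1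

/-- The monomial `Y`. -/
noncomputable def Yv (N : ℕ) : RR N := AddMonoidAlgebra.single ((0 : ℤ), (1 : ℤ)) 1

/-!
Write `G_n = ∑ m < n, a ^ m`. Modulo `(X - a)(X - 1)`, multiplying `X - 1` by `X` amounts to
multiplying it by `a`, so `X ^ n - 1` becomes `G_n (X - 1)` and `X ^ k (X ^ n - 1)` becomes
`a ^ k G_n (X - 1)`. As `X` is a unit, `X ^ n - 1` lies in the ideal as soon as some power of `a`
kills `G_n`. Conversely, after inverting `a` in the coefficient ring, the matrix
`!![1, 1; 0, a]` is an invertible root of `(X - a)(X - 1)` whose `n`-th power has `G_n` in its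
upper right corner. Sending `X` to it and `Y` to `1` kills the ideal, so if `X ^ n - 1` lies there
then `G_n` vanishes in the localization, that is, some power of `a` kills it.

Over `ZMod N` this condition reads `N_a ∣ G_n`, because `N_a` is coprime to `a` whereas the
cofactor `N / N_a` divides a power of `a`.
-/

theorem exists_dvd_pow_of_forall_prime_dvd {M : Type*} [CommMonoidWithZero M]
    [UniqueFactorizationMonoid M] {m b : M} (hm : m ≠ 0)
    (h : ∀ p : M, Prime p → p ∣ m → p ∣ b) : ∃ k : ℕ, m ∣ b ^ k := by
  induction m using UniqueFactorizationMonoid.induction_on_prime with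
  | h₁ => exact absurd rfl hm
  | h₂ u hu => exact ⟨0, hu.dvd⟩
  | h₃ m p hm₀ hp ih =>
    obtain ⟨k, hk⟩ := ih hm₀ fun q hq hqm ↦ h q hq (hqm.mul_left p)
    exact ⟨k + 1, pow_succ' b k ▸ mul_dvd_mul (h p hp (dvd_mul_right p m)) hk⟩

section LargestCoprimeDivisor

variable {N d : ℕ} {a : ℤ}

theorem prime_dvd_of_dvd_cofactor {e p : ℕ} (hcop : IsCoprime (d : ℤ) a)
    (hmax : ∀ c : ℕ, c ∣ d * e → IsCoprime (c : ℤ) a → c ≤ d) (hp : p.Prime) (hpe : p ∣ e) :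
    (p : ℤ) ∣ a := by
  by_contra hpa
  have hpcop : IsCoprime (p : ℤ) a :=
    (Nat.prime_iff_prime_int.mp hp).coprime_iff_not_dvd.mpr hpa
  have hd : 0 < d := hmax 1 (one_dvd _) (by simpa using isCoprime_one_left)
  have hle : d * p ≤ d :=
    hmax (d * p) (mul_dvd_mul_left d hpe) (by exact_mod_cast hcop.mul_left hpcop)
  exact hle.not_gt (lt_mul_of_one_lt_right hd hp.one_lt)

theorem exists_cofactor_dvd_pow {e : ℕ} (he : e ≠ 0) (hcop : IsCoprime (d : ℤ) a)
    (hmax : ∀ c : ℕ, c ∣ d * e → IsCoprime (c : ℤ) a → c ≤ d) : ∃ k : ℕ, (e : ℤ) ∣ a ^ k := by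
  simp only [Int.natCast_dvd, Int.natAbs_pow]
  exact exists_dvd_pow_of_forall_prime_dvd he fun p hp hpe ↦
    Int.natCast_dvd.mp (prime_dvd_of_dvd_cofactor hcop hmax hp.nat_prime hpe)

theorem exists_dvd_pow_mul_iff_largest_coprime_divisor_dvd (hN : 0 < N) (hdN : d ∣ N)
    (hcop : IsCoprime (d : ℤ) a) (hmax : ∀ c : ℕ, c ∣ N → IsCoprime (c : ℤ) a → c ≤ d) (g : ℤ) :
    (∃ k : ℕ, (N : ℤ) ∣ a ^ k * g) ↔ (d : ℤ) ∣ g := by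
  constructor
  · rintro ⟨k, hk⟩
    exact hcop.pow_right.dvd_of_dvd_mul_left ((Int.natCast_dvd_natCast.mpr hdN).trans hk)
  · obtain ⟨e, rfl⟩ := hdN
    intro hg
    obtain ⟨k, hk⟩ := exists_cofactor_dvd_pow (right_ne_zero_of_mul hN.ne') hcop hmax
    exact ⟨k, by rw [Nat.cast_mul, mul_comm (a ^ k)]; exact mul_dvd_mul hg hk⟩

end LargestCoprimeDivisor

section CommRing

variable {R : Type*} [CommRing R]

theorem sub_mul_sub_one_dvd_pow_sub_one_sub_geom_sum_mul (x a : R) (n : ℕ) :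
    (x - a) * (x - 1) ∣ x ^ n - 1 - (∑ m ∈ Finset.range n, a ^ m) * (x - 1) := by
  rw [← geom_sum_mul x n, ← sub_mul, ← Finset.sum_sub_distrib]
  exact mul_dvd_mul_right (Finset.dvd_sum fun m _ ↦ sub_dvd_pow_sub_pow x a m) _

theorem sub_mul_sub_one_dvd_pow_sub_one {x a : R} (hx : IsUnit x) {n k : ℕ}
    (h : a ^ k * ∑ m ∈ Finset.range n, a ^ m = 0) : (x - a) * (x - 1) ∣ x ^ n - 1 := by
  have hgeom := sub_mul_sub_one_dvd_pow_sub_one_sub_geom_sum_mul x a n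
  have hpow : (x - a) * (x - 1) ∣ (x ^ k - a ^ k) * (x - 1) :=
    mul_dvd_mul_right (sub_dvd_pow_sub_pow x a k) _
  refine ((hx.pow k).dvd_mul_left (b := x ^ n - 1)).mp ?_
  convert (hgeom.mul_left (x ^ k)).add (hpow.mul_left (∑ m ∈ Finset.range n, a ^ m)) using 1
  linear_combination (x - 1) * h

/-- The matrix of the affine map `t ↦ 1 + a * t`, acting on row vectors `(1, t)` from the right.
It is the root of `(X - a) * (X - 1)` at which Laurent polynomials are evaluated. -/
def affineMatrix (a : R) : Matrix (Fin 2) (Fin 2) R := !![1, 1; 0, a]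

theorem affineMatrix_sub_mul_sub_one (a : R) :
    (affineMatrix a - algebraMap R _ a) * (affineMatrix a - 1) = 0 := by
  ext i j
  fin_cases i <;> fin_cases j <;>
    simp [affineMatrix, Matrix.mul_apply, Matrix.algebraMap_matrix_apply]

theorem affineMatrix_pow (a : R) (n : ℕ) :
    affineMatrix a ^ n = !![1, ∑ m ∈ Finset.range n, a ^ m; 0, a ^ n] := by
  induction n with
  | zero => simp [Matrix.one_fin_two]
  | succ n ih =>
    rw [pow_succ', ih]
    simp [affineMatrix, pow_succ', Finset.sum_range_succ]

theorem isUnit_affineMatrix {a : R} (ha : IsUnit a) : IsUnit (affineMatrix a) := by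
  simpa [affineMatrix, Matrix.isUnit_iff_isUnit_det, Matrix.det_fin_two] using ha

end CommRing

section Laurent

variable (R : Type*) [CommRing R]

/-- The monomial `X` of the Laurent polynomial ring `R[X^{±1}, Y^{±1}]`, encoded as in `Xv` but
over an arbitrary coefficient ring. -/
noncomputable def laurentX : AddMonoidAlgebra R (ℤ × ℤ) := AddMonoidAlgebra.single (1, 0) 1

/-- The monomial `Y` of the Laurent polynomial ring `R[X^{±1}, Y^{±1}]`, encoded as in `Yv` but
over an arbitrary coefficient ring. -/
noncomputable def laurentY : AddMonoidAlgebra R (ℤ × ℤ) := AddMonoidAlgebra.single (0, 1) 1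

theorem isUnit_laurentX : IsUnit (laurentX R) :=
  (Group.isUnit (Multiplicative.ofAdd ((1 : ℤ), (0 : ℤ)))).map (AddMonoidAlgebra.of R (ℤ × ℤ))

variable {A : Type*} [Ring A] [Algebra R A] (u : Aˣ)

/-- Evaluation of Laurent polynomials at `X = u`, `Y = 1`, for a unit `u` of an `R`-algebra `A`. It
is used with `A` a matrix algebra, so `A` is not assumed commutative. -/
noncomputable def laurentEval : AddMonoidAlgebra R (ℤ × ℤ) →ₐ[R] A :=
  AddMonoidAlgebra.lift R A (ℤ × ℤ) ((Units.coeHom A).comp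
    ((zpowersHom Aˣ u).comp (AddMonoidHom.toMultiplicative (AddMonoidHom.fst ℤ ℤ))))

theorem laurentEval_laurentX : laurentEval R u (laurentX R) = u := by
  simp [laurentEval, laurentX]

theorem laurentEval_laurentY : laurentEval R u (laurentY R) = 1 := by
  simp [laurentEval, laurentY]

variable {R}

theorem algebraMap_geom_sum_eq_zero_of_laurentX_pow_sub_one_mem {S : Type*} [CommRing S]
    [Algebra R S] {a : R} (ha : IsUnit (algebraMap R S a)) {n : ℕ}
    (h : laurentX R ^ n - 1 ∈ Ideal.span
      {(laurentX R - algebraMap R _ a) * (laurentX R - 1),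
        (laurentY R - algebraMap R _ a) * (laurentY R - 1)}) :
    algebraMap R S (∑ m ∈ Finset.range n, a ^ m) = 0 := by
  obtain ⟨u, hu⟩ := isUnit_affineMatrix ha
  obtain ⟨f, g, hfg⟩ := Ideal.mem_span_pair.mp h
  have hroot := affineMatrix_sub_mul_sub_one (algebraMap R S a)
  rw [← IsScalarTower.algebraMap_apply] at hroot
  have hpow : affineMatrix (algebraMap R S a) ^ n - 1 = 0 := by
    simpa only [map_add, map_mul, map_sub, map_pow, map_one, AlgHom.commutes,
      laurentEval_laurentX, laurentEval_laurentY, hu, hroot, sub_self, mul_zero, add_zero]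
      using (congrArg (laurentEval R u) hfg).symm
  simpa [affineMatrix_pow] using congrFun₂ hpow 0 1

theorem stmt13_general (a : R) (n : ℕ) :
    laurentX R ^ n - 1 ∈ Ideal.span
        {(laurentX R - algebraMap R _ a) * (laurentX R - 1),
          (laurentY R - algebraMap R _ a) * (laurentY R - 1)} ↔
      ∃ k : ℕ, a ^ k * ∑ m ∈ Finset.range n, a ^ m = 0 := by
  constructor
  · intro h
    have hzero := algebraMap_geom_sum_eq_zero_of_laurentX_pow_sub_one_mem
      (IsLocalization.Away.algebraMap_isUnit (S := Localization.Away a) a) h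
    obtain ⟨⟨_, k, rfl⟩, hk⟩ := (IsLocalization.map_eq_zero_iff (Submonoid.powers a) _ _).mp hzero
    exact ⟨k, hk⟩
  · rintro ⟨k, hk⟩
    refine Ideal.mem_of_dvd _ (sub_mul_sub_one_dvd_pow_sub_one (isUnit_laurentX R) (k := k) ?_)
      (Ideal.subset_span (Set.mem_insert _ _))
    simpa only [map_mul, map_pow, map_sum, map_zero] using
      congrArg (algebraMap R (AddMonoidAlgebra R (ℤ × ℤ))) hk

end Laurent

/-- Mobility condition for the Delfino–Chamon–You model `BB_N((X-a)(X-1), (Y-a)(Y-1))`: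
`X^α - 1` lies in the defining ideal iff `N_a` divides `G_α = ∑_{m<α} a^m`. -/
theorem stmt13 (N : ℕ) (hN : 0 < N) (a : ℤ) (Na : ℕ)
    (hNa_dvd : Na ∣ N) (hNa_cop : IsCoprime (Na : ℤ) a)
    (hNa_max : ∀ d : ℕ, d ∣ N → IsCoprime ((d : ℤ)) a → d ≤ Na)
    (α : ℕ) :
    (Xv N ^ α - 1 ∈ Ideal.span
        {(Xv N - (a : RR N)) * (Xv N - 1), (Yv N - (a : RR N)) * (Yv N - 1)}) ↔
      (Na : ℤ) ∣ ∑ m ∈ Finset.range α, a ^ m := by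
  rw [← exists_dvd_pow_mul_iff_largest_coprime_divisor_dvd hN hNa_dvd hNa_cop hNa_max]
  simpa [Xv, Yv, laurentX, laurentY, ← ZMod.intCast_zmod_eq_zero_iff_dvd] using
    stmt13_general (a : ZMod N) α
end
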